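/- The function f(α) = η(α)/(Φ⁻¹(α))², where η(α) = ((1-2α)/2) ln((1-α)/α), is monotonically increasing on the interval (0, 1/2). -/

import Mathlib

open Real Set Filter Topology

noncomputable def phi (y : ℝ) : ℝ := (Real.sqrt (2 * Real.pi))⁻¹ * Real.exp (-y ^ 2 / 2)

noncomputable def Phi (x : ℝ) : ℝ := ∫ y in Set.Iic x, phi y

noncomputable def PhiInv (a : ℝ) : ℝ := Function.invFun Phi a

/-- The upper tail of the standard normal distribution. -/
noncomputable def normalTail (x : ℝ) : ℝ := Phi (-x)

/-- The density of the standard normal distribution at its mode. -/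
noncomputable def phiMax : ℝ := (Real.sqrt (2 * Real.pi))⁻¹

lemma phi_eq (x : ℝ) : phi x = phiMax * Real.exp (-x ^ 2 / 2) := rfl

lemma phiMax_pos : 0 < phiMax := by
  unfold phiMax
  positivity

lemma phiMax_sq : phiMax ^ 2 = (2 * Real.pi)⁻¹ := by
  rw [phiMax, inv_pow, Real.sq_sqrt (by positivity)]

lemma phiMax_lt : phiMax < 0.39895 := by
  have h := phiMax_sq
  have hpi := Real.pi_gt_d4
  have h2 : (2 * Real.pi)⁻¹ < (0.39895 : ℝ) ^ 2 := by
    rw [inv_lt_comm₀ (by positivity) (by positivity)]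
    norm_num
    linarith
  exact lt_of_pow_lt_pow_left₀ 2 (by norm_num) (h ▸ h2)

lemma lt_phiMax : 0.3989 < phiMax := by
  have h := phiMax_sq
  have hpi := Real.pi_lt_d4
  have h2 : (0.3989 : ℝ) ^ 2 < (2 * Real.pi)⁻¹ := by
    rw [lt_inv_comm₀ (by positivity) (by positivity)]
    norm_num
    linarith
  exact lt_of_pow_lt_pow_left₀ 2 phiMax_pos.le (h ▸ h2)

lemma phi_pos (x : ℝ) : 0 < phi x := by
  rw [phi_eq]
  exact mul_pos phiMax_pos (Real.exp_pos _)

lemma phi_neg (x : ℝ) : phi (-x) = phi x := by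
  simp [phi]

lemma hasDerivAt_phi (x : ℝ) : HasDerivAt phi (-x * phi x) x := by
  have h : HasDerivAt (fun y : ℝ => -y ^ 2 / 2) (-x) x := by
    have := ((hasDerivAt_pow 2 x).neg).div_const 2
    exact this.congr_deriv (by norm_num; ring)
  exact (h.exp.const_mul _).congr_deriv (by rw [phi]; ring)

lemma continuous_phi : Continuous phi :=
  continuous_iff_continuousAt.2 fun x => (hasDerivAt_phi x).continuousAt

lemma phi_eq_gaussianPDFReal : phi = ProbabilityTheory.gaussianPDFReal 0 1 := by
  ext x
  simp [phi, ProbabilityTheory.gaussianPDFReal]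

lemma integrable_phi : MeasureTheory.Integrable phi := by
  rw [phi_eq_gaussianPDFReal]
  exact ProbabilityTheory.integrable_gaussianPDFReal 0 1

lemma integral_phi : ∫ x, phi x = 1 := by
  rw [phi_eq_gaussianPDFReal]
  exact ProbabilityTheory.integral_gaussianPDFReal_eq_one 0 one_ne_zero

lemma hasDerivAt_Phi (x : ℝ) : HasDerivAt Phi (phi x) x := by
  have h : Phi = fun y => Phi 0 + ∫ t in (0 : ℝ)..y, phi t := by
    ext y
    have := intervalIntegral.integral_Iic_sub_Iic (a := 0) (b := y)
      integrable_phi.integrableOn integrable_phi.integrableOn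
    simp only [Phi]
    linarith
  rw [h]
  exact (intervalIntegral.integral_hasDerivAt_right (continuous_phi.intervalIntegrable _ _)
    (continuous_phi.stronglyMeasurableAtFilter _ _) continuous_phi.continuousAt).const_add _

lemma strictMono_Phi : StrictMono Phi :=
  strictMono_of_deriv_pos fun x => by
    rw [(hasDerivAt_Phi x).deriv]
    exact phi_pos x

lemma tendsto_Phi_atBot : Tendsto Phi atBot (𝓝 0) :=
  MeasureTheory.tendsto_integral_Iic_zero tendsto_id

lemma Phi_zero : Phi 0 = 1 / 2 := by
  have h1 : Phi 0 + ∫ x in Set.Ioi 0, phi x = 1 := by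
    rw [← integral_phi]
    exact intervalIntegral.integral_Iic_add_Ioi integrable_phi.integrableOn
      integrable_phi.integrableOn
  have h2 : Phi 0 = ∫ x in Set.Ioi 0, phi x := by
    have := integral_comp_neg_Iic (0 : ℝ) phi
    simp only [phi_neg, neg_zero] at this
    exact this
  linarith

lemma PhiInv_Phi (x : ℝ) : PhiInv (Phi x) = x :=
  Function.leftInverse_invFun strictMono_Phi.injective x

lemma Phi_pos (x : ℝ) : 0 < Phi x := by
  have h : 0 ≤ Phi (x - 1) :=
    MeasureTheory.integral_nonneg fun y => (phi_pos y).le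
  exact h.trans_lt (strictMono_Phi (by linarith))

lemma exists_normalTail_eq {a : ℝ} (ha : a ∈ Set.Ioo (0 : ℝ) (1 / 2)) :
    ∃ x, 0 < x ∧ normalTail x = a := by
  have hc : Continuous Phi :=
    continuous_iff_continuousAt.2 fun x => (hasDerivAt_Phi x).continuousAt
  obtain ⟨y, hy⟩ := (tendsto_Phi_atBot.eventually_lt_const ha.1).exists
  obtain ⟨z, hz⟩ := mem_range_of_exists_le_of_exists_ge hc ⟨y, hy.le⟩ ⟨0, Phi_zero ▸ ha.2.le⟩
  refine ⟨-z, ?_, by simpa [normalTail] using hz⟩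
  have : Phi z < Phi 0 := by rw [hz, Phi_zero]; exact ha.2
  linarith [strictMono_Phi.lt_iff_lt.1 this]

lemma hasDerivAt_normalTail (x : ℝ) : HasDerivAt normalTail (-phi x) x := by
  have h := (hasDerivAt_Phi (-x)).comp x (hasDerivAt_neg x)
  exact h.congr_deriv (by rw [phi_neg]; ring)

lemma strictAnti_normalTail : StrictAnti normalTail := fun _ _ h =>
  strictMono_Phi (neg_lt_neg h)

lemma normalTail_pos (x : ℝ) : 0 < normalTail x := Phi_pos _

lemma normalTail_zero : normalTail 0 = 1 / 2 := by
  simpa [normalTail] using Phi_zero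

lemma normalTail_lt_half {x : ℝ} (hx : 0 < x) : normalTail x < 1 / 2 :=
  normalTail_zero ▸ strictAnti_normalTail hx

lemma tendsto_normalTail : Tendsto normalTail atTop (𝓝 0) :=
  tendsto_Phi_atBot.comp tendsto_neg_atTop_atBot

lemma tendsto_phi_atTop : Tendsto phi atTop (𝓝 0) := by
  have h : Tendsto (fun x : ℝ => -x ^ 2 / 2) atTop atBot := by
    have := (tendsto_pow_atTop (α := ℝ) two_ne_zero).atTop_div_const (zero_lt_two (α := ℝ))
    exact (tendsto_neg_atTop_atBot.comp this).congr fun x => by simp [neg_div]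
  simpa [funext phi_eq, Function.comp_def] using (Real.tendsto_exp_atBot.comp h).const_mul phiMax

lemma nonneg_of_deriv_nonpos_of_tendsto_zero {f f' : ℝ → ℝ} {a : ℝ}
    (hf : ∀ x, a < x → HasDerivAt f (f' x) x) (hf' : ∀ x, a < x → f' x ≤ 0)
    (hlim : Tendsto f atTop (𝓝 0)) {x : ℝ} (hx : a < x) : 0 ≤ f x := by
  have hanti : AntitoneOn f (Set.Ioi a) := by
    refine antitoneOn_of_deriv_nonpos (convex_Ioi a)
      (fun y hy => (hf y hy).continuousAt.continuousWithinAt) ?_ ?_ <;> rw [interior_Ioi]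
    · exact fun y hy => (hf y hy).differentiableAt.differentiableWithinAt
    · exact fun y hy => (hf y hy).deriv ▸ hf' y hy
  refine le_of_tendsto hlim ?_
  filter_upwards [eventually_ge_atTop x] with y hy
  exact hanti hx (hx.trans_le hy) hy

lemma nonneg_of_deriv_nonneg {f f' : ℝ → ℝ} (hf : ∀ x, HasDerivAt f (f' x) x) (h0 : f 0 = 0)
    (hf' : ∀ x, 0 < x → 0 ≤ f' x) {x : ℝ} (hx : 0 ≤ x) : 0 ≤ f x := by
  have hmono : MonotoneOn f (Set.Ici 0) := by
    refine monotoneOn_of_deriv_nonneg (convex_Ici 0)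
      (fun y _ => (hf y).continuousAt.continuousWithinAt)
      (fun y _ => (hf y).differentiableAt.differentiableWithinAt) ?_
    rw [interior_Ici]
    exact fun y hy => (hf y).deriv ▸ hf' y hy
  exact h0 ▸ hmono Set.self_mem_Ici hx hx

lemma tendsto_phi_mul {r : ℝ → ℝ} (h0 : ∀ x, 1 ≤ x → 0 ≤ r x) (h1 : ∀ x, 1 ≤ x → r x ≤ 1) :
    Tendsto (fun x => phi x * r x) atTop (𝓝 0) := by
  refine tendsto_of_tendsto_of_tendsto_of_le_of_le' tendsto_const_nhds tendsto_phi_atTop ?_ ?_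
  · filter_upwards [eventually_ge_atTop 1] with x hx
    exact mul_nonneg (phi_pos x).le (h0 x hx)
  · filter_upwards [eventually_ge_atTop 1] with x hx
    exact mul_le_of_le_one_right (phi_pos x).le (h1 x hx)

/-- Gordon's lower bound for the normal tail. -/
lemma phi_mul_le_normalTail {x : ℝ} (hx : 0 < x) :
    phi x * (x / (1 + x ^ 2)) ≤ normalTail x := by
  have hlim : Tendsto (fun y => normalTail y - phi y * (y / (1 + y ^ 2))) atTop (𝓝 0) := by
    simpa using tendsto_normalTail.sub (tendsto_phi_mul (r := fun y => y / (1 + y ^ 2))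
      (fun y hy => by positivity)
      (fun y hy => by rw [div_le_one (by positivity)]; nlinarith))
  have hderiv : ∀ y : ℝ, 0 < y → HasDerivAt (fun y => normalTail y - phi y * (y / (1 + y ^ 2)))
      (-(2 * phi y / (1 + y ^ 2) ^ 2)) y := fun y _ => by
    have hd : HasDerivAt (fun y : ℝ => y / (1 + y ^ 2))
        ((1 * (1 + y ^ 2) - y * (2 * y)) / (1 + y ^ 2) ^ 2) y :=
      (hasDerivAt_id' y).fun_div (((hasDerivAt_pow 2 y).const_add 1).congr_deriv (by norm_num))
        (by positivity)
    refine ((hasDerivAt_normalTail y).sub ((hasDerivAt_phi y).mul hd)).congr_deriv ?_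
    field_simp
    ring
  have h := nonneg_of_deriv_nonpos_of_tendsto_zero hderiv (fun y _ => by
    have := phi_pos y
    rw [neg_nonpos]
    positivity) hlim hx
  linarith

lemma normalTail_le_phi_mul {x : ℝ} (hx : 0 < x) :
    normalTail x ≤ phi x * ((x ^ 2 + 2) / (x ^ 3 + 3 * x)) := by
  have hlim : Tendsto (fun y => phi y * ((y ^ 2 + 2) / (y ^ 3 + 3 * y)) - normalTail y)
      atTop (𝓝 0) := by
    simpa using (tendsto_phi_mul (r := fun y => (y ^ 2 + 2) / (y ^ 3 + 3 * y))
      (fun y hy => by positivity)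
      (fun y hy => by
        rw [div_le_one (by positivity)]
        nlinarith [mul_nonneg (sq_nonneg y) (sub_nonneg.2 hy)])).sub tendsto_normalTail
  have hderiv : ∀ y : ℝ, 0 < y →
      HasDerivAt (fun y => phi y * ((y ^ 2 + 2) / (y ^ 3 + 3 * y)) - normalTail y)
      (-(6 * phi y / (y ^ 3 + 3 * y) ^ 2)) y := fun y hy => by
    have hd : HasDerivAt (fun y : ℝ => (y ^ 2 + 2) / (y ^ 3 + 3 * y))
        ((2 * y * (y ^ 3 + 3 * y) - (y ^ 2 + 2) * (3 * y ^ 2 + 3)) / (y ^ 3 + 3 * y) ^ 2) y :=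
      HasDerivAt.fun_div (((hasDerivAt_pow 2 y).add_const 2).congr_deriv (by norm_num))
        (((hasDerivAt_pow 3 y).add ((hasDerivAt_id' y).const_mul 3)).congr_deriv (by norm_num))
        (by positivity)
    refine (((hasDerivAt_phi y).mul hd).sub (hasDerivAt_normalTail y)).congr_deriv ?_
    field_simp
    ring
  have h := nonneg_of_deriv_nonpos_of_tendsto_zero hderiv (fun y hy => by
    have := phi_pos y
    rw [neg_nonpos]
    positivity) hlim hx
  linarith

/-- The probability that a standard normal variable has absolute value at most `x`. -/
noncomputable def centralMass (x : ℝ) : ℝ := 1 - 2 * normalTail x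

lemma hasDerivAt_centralMass (x : ℝ) : HasDerivAt centralMass (2 * phi x) x :=
  (((hasDerivAt_normalTail x).const_mul 2).const_sub 1).congr_deriv (by ring)

lemma centralMass_zero : centralMass 0 = 0 := by
  rw [centralMass, normalTail_zero]
  norm_num

lemma centralMass_nonneg {x : ℝ} (hx : 0 ≤ x) : 0 ≤ centralMass x :=
  nonneg_of_deriv_nonneg hasDerivAt_centralMass centralMass_zero
    (fun y _ => by have := phi_pos y; positivity) hx

lemma phi_le_phiMax (x : ℝ) : phi x ≤ phiMax := by
  rw [phi_eq]
  exact mul_le_of_le_one_right phiMax_pos.le (Real.exp_le_one_iff.2 (by nlinarith [sq_nonneg x]))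

lemma centralMass_le {x : ℝ} (hx : 0 ≤ x) : centralMass x ≤ 2 * phiMax * x := by
  have h := nonneg_of_deriv_nonneg (f := fun y => 2 * phiMax * y - centralMass y)
    (f' := fun y => 2 * phiMax * 1 - 2 * phi y)
    (fun y => ((hasDerivAt_id' y).const_mul _).sub (hasDerivAt_centralMass y))
    (by simp [centralMass_zero])
    (fun y _ => by linarith [phi_le_phiMax y]) hx
  linarith

lemma centralMass_poly_le_sq {x : ℝ} (hx : 0 ≤ x) :
    1.57 * centralMass x ^ 2 + 0.616 * centralMass x ^ 4 + 0.161 * centralMass x ^ 6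
      ≤ x ^ 2 := by
  have h := nonneg_of_deriv_nonneg
    (f := fun y => y ^ 2 - (1.57 * centralMass y ^ 2 + 0.616 * centralMass y ^ 4
      + 0.161 * centralMass y ^ 6))
    (f' := fun y => 2 * y - 2 * phi y * centralMass y * (3.14 + 2.464 * centralMass y ^ 2
      + 0.966 * (centralMass y ^ 2) ^ 2))
    (fun y => by
      have hA := hasDerivAt_centralMass y
      refine ((hasDerivAt_pow 2 y).sub ((((hA.pow 2).const_mul 1.57).add
        ((hA.pow 4).const_mul 0.616)).add ((hA.pow 6).const_mul 0.161))).congr_deriv ?_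
      norm_num
      ring)
    (by simp [centralMass_zero])
    (fun y hy => by
      have hA0 := centralMass_nonneg hy.le
      have hA := centralMass_le hy.le
      have hc0 := phiMax_pos
      have hc : (2 * phiMax) ^ 2 ≤ 2 / 3.14 := by
        rw [mul_pow, phiMax_sq, ← div_eq_mul_inv, div_le_div_iff₀ (by positivity) (by norm_num)]
        linarith [Real.pi_gt_d2]
      set A := centralMass y
      set c := 2 * phiMax with hcdef
      set E := Real.exp (-y ^ 2 / 2) with hE
      have hE0 : 0 < E := Real.exp_pos _
      have hphi : 2 * phi y = c * E := by rw [phi_eq, hcdef, hE]; ring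
      have hc0' : 0 ≤ c := by positivity
      have hA2 : A ^ 2 ≤ 2 / 3.14 * y ^ 2 := by
        calc A ^ 2 ≤ (c * y) ^ 2 := by gcongr
          _ = c ^ 2 * y ^ 2 := by ring
          _ ≤ _ := by gcongr
      have hphiA : 2 * phi y * A ≤ 2 / 3.14 * y * E := by
        calc 2 * phi y * A ≤ c * E * (c * y) := by rw [hphi]; gcongr
          _ = c ^ 2 * y * E := by ring
          _ ≤ _ := by gcongr
      have hpoly : 3.14 + 2.464 * A ^ 2 + 0.966 * (A ^ 2) ^ 2
          ≤ 3.14 * (1 + y ^ 2 / 2 + (y ^ 2 / 2) ^ 2 / 2) := by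
        have : (A ^ 2) ^ 2 ≤ (2 / 3.14 * y ^ 2) ^ 2 := by gcongr
        nlinarith [sq_nonneg y, sq_nonneg (y ^ 2)]
      have hexp : (1 + y ^ 2 / 2 + (y ^ 2 / 2) ^ 2 / 2) * E ≤ 1 := by
        have h1 := Real.quadratic_le_exp_of_nonneg (x := y ^ 2 / 2) (by positivity)
        calc _ ≤ Real.exp (y ^ 2 / 2) * E := by gcongr
          _ = 1 := by rw [hE, ← Real.exp_add]; simp [neg_div]
      have : 2 * phi y * A * (3.14 + 2.464 * A ^ 2 + 0.966 * (A ^ 2) ^ 2) ≤ 2 * y := by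
        calc _ ≤ 2 / 3.14 * y * E * (3.14 * (1 + y ^ 2 / 2 + (y ^ 2 / 2) ^ 2 / 2)) := by gcongr
          _ = 2 * y * ((1 + y ^ 2 / 2 + (y ^ 2 / 2) ^ 2 / 2) * E) := by ring
          _ ≤ 2 * y * 1 := by gcongr
          _ = 2 * y := mul_one _
      linarith) hx
  linarith

lemma two_mul_mul_phi_le {x : ℝ} (hx : 0 ≤ x) :
    2 * (x * phi x) ≤ centralMass x * (1 - 0.5233 * centralMass x ^ 2
      - 0.1232 * centralMass x ^ 4 - 0.023 * centralMass x ^ 6) := by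
  have h := nonneg_of_deriv_nonneg
    (f := fun y => (centralMass y - 0.5233 * centralMass y ^ 3
      - 0.1232 * centralMass y ^ 5 - 0.023 * centralMass y ^ 7) - 2 * (y * phi y))
    (f' := fun y => 2 * phi y * (y ^ 2 - (1.5699 * centralMass y ^ 2 + 0.616 * centralMass y ^ 4
      + 0.161 * centralMass y ^ 6)))
    (fun y => by
      have hA := hasDerivAt_centralMass y
      refine ((((hA.sub ((hA.pow 3).const_mul 0.5233)).sub ((hA.pow 5).const_mul 0.1232)).sub
        ((hA.pow 7).const_mul 0.023)).sub
        (((hasDerivAt_id' y).mul (hasDerivAt_phi y)).const_mul 2)).congr_deriv ?_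
      norm_num
      ring)
    (by simp [centralMass_zero])
    (fun y hy => by
      have h1 := centralMass_poly_le_sq hy.le
      have h2 := phi_pos y
      have h3 := sq_nonneg (centralMass y)
      exact mul_nonneg (by positivity) (by linarith)) hx
  linarith

/-- The value `artanh (centralMass x)`, half the log-odds of the normal distribution function. -/
noncomputable def artanhCentralMass (x : ℝ) : ℝ :=
  (Real.log (1 - normalTail x) - Real.log (normalTail x)) / 2

lemma hasDerivAt_artanhCentralMass {x : ℝ} (hx : 0 < x) :
    HasDerivAt artanhCentralMass (phi x / (2 * (normalTail x * (1 - normalTail x)))) x := by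
  have hq := normalTail_pos x
  have hq' := normalTail_lt_half hx
  have hp : 0 < 1 - normalTail x := by linarith
  have hd := hasDerivAt_normalTail x
  refine (((hd.const_sub 1).log hp.ne').sub (hd.log hq.ne')).div_const 2 |>.congr_deriv ?_
  field_simp
  ring

lemma artanhCentralMass_ge {x : ℝ} (hx : 0 < x) :
    centralMass x * ∑ k ∈ Finset.range 9, (centralMass x ^ 2) ^ k / (2 * k + 1)
      ≤ artanhCentralMass x := by
  have hq := normalTail_pos x
  have hA0 := centralMass_nonneg hx.le
  have habs : |centralMass x| < 1 := by
    rw [abs_of_nonneg hA0, centralMass]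
    linarith
  have hs := Real.hasSum_log_sub_log_of_abs_lt_one habs
  have hle := sum_le_hasSum (Finset.range 9) (fun k _ => by positivity) hs
  have hlog : Real.log (1 + centralMass x) - Real.log (1 - centralMass x)
      = 2 * artanhCentralMass x := by
    have hq' := normalTail_lt_half hx
    rw [artanhCentralMass, centralMass,
      show 1 + (1 - 2 * normalTail x) = 2 * (1 - normalTail x) by ring,
      show 1 - (1 - 2 * normalTail x) = 2 * normalTail x by ring,
      Real.log_mul two_ne_zero (by linarith), Real.log_mul two_ne_zero hq.ne']
    ring
  rw [hlog] at hle
  have : ∑ k ∈ Finset.range 9, (2 : ℝ) * (1 / (2 * k + 1)) * centralMass x ^ (2 * k + 1)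
      = 2 * (centralMass x * ∑ k ∈ Finset.range 9, (centralMass x ^ 2) ^ k / (2 * k + 1)) := by
    rw [Finset.mul_sum, Finset.mul_sum]
    refine Finset.sum_congr rfl fun k _ => ?_
    rw [pow_succ, pow_mul]
    ring
  linarith

lemma poly_mul_le_two_mul_artanh_partial_sum {a : ℝ} (h0 : 0 ≤ a) (h1 : a ≤ 0.7762) :
    (1 - 0.5233 * a - 0.1232 * a ^ 2 - 0.023 * a ^ 3)
        * (1 + (1 - a) * ∑ k ∈ Finset.range 9, a ^ k / (2 * k + 1))
      ≤ 2 * ((1 - a) * ∑ k ∈ Finset.range 9, a ^ k / (2 * k + 1)) := by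
  set e := (1 - a) * ∑ k ∈ Finset.range 9, a ^ k / (2 * k + 1) with he
  have h2 : a ^ 2 ≤ 0.7762 ^ 2 := by gcongr
  have h3 : a ^ 3 ≤ 0.7762 ^ 3 := by gcongr
  have h4 : a ^ 4 ≤ 0.7762 ^ 4 := by gcongr
  have h5 : a ^ 5 ≤ 0.7762 ^ 5 := by gcongr
  have h6 : a ^ 6 ≤ 0.7762 ^ 6 := by gcongr
  have hlow : 1 - a * (2 / 3 + 2 / 15 * a + 2 / 35 * a ^ 2 + 0.0801 * a ^ 3) ≤ e := by
    have hrem : 2 / 63 + 2 / 99 * a + 2 / 143 * a ^ 2 + 2 / 195 * a ^ 3 + 2 / 255 * a ^ 4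
        + 1 / 17 * a ^ 5 ≤ 0.0801 := by linarith
    have h := mul_le_mul_of_nonneg_left hrem (by positivity : 0 ≤ a ^ 4)
    rw [he]
    norm_num [Finset.sum_range_succ]
    linarith
  have hs : 0 ≤ 0.5233 * a + 0.1232 * a ^ 2 + 0.023 * a ^ 3 := by positivity
  set r := 2 / 3 + 2 / 15 * a + 2 / 35 * a ^ 2 + 0.0801 * a ^ 3 with hr
  have hpol : 0 ≤ (0.5233 + 0.1232 * a + 0.023 * a ^ 2) * (2 - a * r) - r := by
    rw [hr]
    linarith
  nlinarith [mul_le_mul_of_nonneg_left hlow hs, mul_nonneg h0 hpol]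

lemma exp_neg_nine_eighths_lt : Real.exp (-(9 / 8)) < 0.3247 := by
  refine lt_of_pow_lt_pow_left₀ 8 (by norm_num) ?_
  rw [← Real.exp_nat_mul, show ((8 : ℕ) : ℝ) * -(9 / 8) = -((9 : ℕ) * 1) by norm_num,
    Real.exp_neg, Real.exp_nat_mul]
  have h : (2.7182818283 : ℝ) ^ 9 < Real.exp 1 ^ 9 := by
    gcongr
    exact Real.exp_one_gt_d9
  refine (inv_strictAnti₀ (by positivity) h).trans ?_
  norm_num

lemma lt_exp_neg_nine_eighths : 0.3246 < Real.exp (-(9 / 8)) := by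
  refine lt_of_pow_lt_pow_left₀ 8 (Real.exp_pos _).le ?_
  rw [← Real.exp_nat_mul, show ((8 : ℕ) : ℝ) * -(9 / 8) = -((9 : ℕ) * 1) by norm_num,
    Real.exp_neg, Real.exp_nat_mul]
  have h : Real.exp 1 ^ 9 < (2.7182818286 : ℝ) ^ 9 := by
    gcongr
    exact Real.exp_one_lt_d9
  refine lt_trans ?_ (inv_strictAnti₀ (by positivity) h)
  norm_num

lemma lt_exp_neg_thirteen_tenths : 0.266 < Real.exp (-(13 / 10)) := by
  refine lt_of_pow_lt_pow_left₀ 10 (Real.exp_pos _).le ?_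
  rw [← Real.exp_nat_mul, show ((10 : ℕ) : ℝ) * -(13 / 10) = -((13 : ℕ) * 1) by norm_num,
    Real.exp_neg, Real.exp_nat_mul]
  have h : Real.exp 1 ^ 13 < (2.7182818286 : ℝ) ^ 13 := by
    gcongr
    exact Real.exp_one_lt_d9
  refine lt_trans ?_ (inv_strictAnti₀ (by positivity) h)
  norm_num

lemma centralMass_le_of_le {x : ℝ} (hx : x ≤ 3 / 2) : centralMass x ≤ 0.881 := by
  have h1 : normalTail (3 / 2) ≤ normalTail x := strictAnti_normalTail.antitone hx
  have h2 := phi_mul_le_normalTail (x := 3 / 2) (by norm_num)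
  have h3 : 0.3989 * 0.3246 ≤ phi (3 / 2) := by
    rw [phi_eq, show -(3 / 2 : ℝ) ^ 2 / 2 = -(9 / 8) by norm_num]
    exact mul_le_mul lt_phiMax.le lt_exp_neg_nine_eighths.le (by norm_num) phiMax_pos.le
  rw [centralMass]
  norm_num at h2 h3 ⊢
  linarith

lemma phi_mul_le_of_le {x : ℝ} (hx : 0 < x) (hx' : x ≤ 3 / 2) :
    x * phi x * ((1 - centralMass x ^ 2) * artanhCentralMass x + centralMass x)
      ≤ centralMass x * ((1 - centralMass x ^ 2) * artanhCentralMass x) := by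
  have hphi := two_mul_mul_phi_le hx.le
  have hL := artanhCentralMass_ge hx
  have hA0 := centralMass_nonneg hx.le
  have hA1 := centralMass_le_of_le hx'
  set A := centralMass x
  have ha : A ^ 2 ≤ 0.7762 := by nlinarith
  have hpol := poly_mul_le_two_mul_artanh_partial_sum (sq_nonneg A) ha
  set e := (1 - A ^ 2) * ∑ k ∈ Finset.range 9, (A ^ 2) ^ k / (2 * k + 1) with he
  set E := (1 - A ^ 2) * artanhCentralMass x with hE
  have hEe : A * e ≤ E := by
    have := mul_le_mul_of_nonneg_left hL (by linarith : 0 ≤ 1 - A ^ 2)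
    rw [he, hE]
    linarith
  have he0 : 0 ≤ e :=
    mul_nonneg (by linarith) (Finset.sum_nonneg fun k _ => by positivity)
  have hE0 : 0 ≤ E := (mul_nonneg hA0 he0).trans hEe
  set p := 1 - 0.5233 * A ^ 2 - 0.1232 * A ^ 4 - 0.023 * A ^ 6 with hp
  have hp1 : p ≤ 1 := by
    have : 0 ≤ A ^ 4 := by positivity
    have : 0 ≤ A ^ 6 := by positivity
    have : 0 ≤ A ^ 2 := by positivity
    linarith
  have hpe : p * (1 + e) ≤ 2 * e := by
    rw [hp]
    convert hpol using 2
    ring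
  have hpE : p * (E + A) ≤ 2 * E := by
    nlinarith [mul_le_mul_of_nonneg_left hpe hA0,
      mul_le_mul_of_nonneg_left hEe (by linarith : 0 ≤ 2 - p)]
  nlinarith [mul_le_mul_of_nonneg_right hphi (by linarith : 0 ≤ E + A),
    mul_le_mul_of_nonneg_left hpE hA0]

lemma mul_phi_bound {x : ℝ} (hx : 3 / 2 ≤ x) {w : ℝ} (hw : x ^ 2 = 9 / 4 + 2 * w) :
    x * phi x * (1 + w + w ^ 2 / 2) ≤ 0.12954 * (3 / 2 + 2 / 3 * w) := by
  have hw0 : 0 ≤ w := by nlinarith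
  have hx1 : x ≤ 3 / 2 + 2 / 3 * w := by nlinarith [sq_nonneg (x - 3 / 2)]
  have hphi : phi x = phiMax * Real.exp (-(9 / 8)) * Real.exp (-w) := by
    rw [phi_eq, mul_assoc, ← Real.exp_add]
    congr 2
    linarith
  have hexp : (1 + w + w ^ 2 / 2) * Real.exp (-w) ≤ 1 := by
    calc _ ≤ Real.exp w * Real.exp (-w) := by
          gcongr
          exact Real.quadratic_le_exp_of_nonneg hw0
      _ = 1 := by rw [← Real.exp_add]; simp
  have hconst : phiMax * Real.exp (-(9 / 8)) ≤ 0.12954 :=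
    (mul_le_mul phiMax_lt.le exp_neg_nine_eighths_lt.le (Real.exp_pos _).le
      (by norm_num)).trans (by norm_num)
  have hc0 := phiMax_pos
  calc x * phi x * (1 + w + w ^ 2 / 2)
      = phiMax * Real.exp (-(9 / 8)) * x * ((1 + w + w ^ 2 / 2) * Real.exp (-w)) := by
        rw [hphi]; ring
    _ ≤ phiMax * Real.exp (-(9 / 8)) * x * 1 := by gcongr
    _ ≤ 0.12954 * (3 / 2 + 2 / 3 * w) := by rw [mul_one]; gcongr

lemma tail_poly_bound {w q s : ℝ} (hw : 0 ≤ w) (hq : 0 ≤ q) (hqs : q ≤ 0.36 * s)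
    (hs : s * (1 + w + w ^ 2 / 2) ≤ 0.12954 * (3 / 2 + 2 / 3 * w)) :
    (1 + (9 / 4 + 2 * w)) * (1 - 2 * q)
      ≤ ((1 - q) * (9 / 4 + 2 * w + 2.6) - 2 * q) * (1 - 2 * q - s) := by
  have hd : 0 < 1 + w + w ^ 2 / 2 := by positivity
  set S := 0.12954 * (3 / 2 + 2 / 3 * w) / (1 + w + w ^ 2 / 2) with hS
  have hsS : s ≤ S := by rwa [hS, le_div_iff₀ hd]
  have hS1 : S ≤ 0.195 := by
    rw [hS, div_le_iff₀ hd]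
    nlinarith
  have hs0 : 0 ≤ s := by linarith
  have hS_pol : 0 ≤ 1.6 - S * (1.36 * (9 / 4 + 2 * w) + 5.408)
      + S ^ 2 * (0.6192 * (9 / 4 + 2 * w) + 2.84832) := by
    have : 1.6 - S * (1.36 * (9 / 4 + 2 * w) + 5.408)
      + S ^ 2 * (0.6192 * (9 / 4 + 2 * w) + 2.84832) =
      (1.6 * (1 + w + w ^ 2 / 2) ^ 2 - 0.12954 * (3 / 2 + 2 / 3 * w) * (1 + w + w ^ 2 / 2)
        * (1.36 * (9 / 4 + 2 * w) + 5.408) + (0.12954 * (3 / 2 + 2 / 3 * w)) ^ 2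
        * (0.6192 * (9 / 4 + 2 * w) + 2.84832)) / (1 + w + w ^ 2 / 2) ^ 2 := by
      rw [hS]
      field_simp
    rw [this]
    refine div_nonneg ?_ (by positivity)
    ring_nf
    positivity
  have hs_pol : 0 ≤ 1.6 - s * (1.36 * (9 / 4 + 2 * w) + 5.408)
      + s ^ 2 * (0.6192 * (9 / 4 + 2 * w) + 2.84832) := by
    have : 0 ≤ (S - s) * ((1.36 * (9 / 4 + 2 * w) + 5.408)
        - (S + s) * (0.6192 * (9 / 4 + 2 * w) + 2.84832)) := by
      refine mul_nonneg (by linarith) ?_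
      nlinarith [mul_nonneg hw (by linarith : 0 ≤ 0.39 - (S + s))]
    linarith
  have : 0 ≤ (0.36 * s - q) * ((9 / 4 + 2 * w + 3 * 2.6) - (9 / 4 + 2 * w + 2.6)
      * (2 * (q + 0.36 * s) + s) - 4 * (q + 0.36 * s) - 2 * s) := by
    refine mul_nonneg (by linarith) ?_
    have h1 : 2 * (q + 0.36 * s) + s ≤ 0.5 := by linarith
    nlinarith [mul_le_mul_of_nonneg_left h1 (by linarith : 0 ≤ 9 / 4 + 2 * w + 2.6)]
  nlinarith

lemma log_normalTail_le {x : ℝ} (hx : 3 / 2 ≤ x) :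
    Real.log (normalTail x) ≤ -(x ^ 2 / 2 + 1.3) := by
  have hx0 : 0 < x := by linarith
  rw [Real.log_le_iff_le_exp (normalTail_pos x)]
  have h1 := normalTail_le_phi_mul hx0
  have h2 : (x ^ 2 + 2) / (x ^ 3 + 3 * x) ≤ 2 / 3 := by
    rw [div_le_iff₀ (by positivity)]
    nlinarith [mul_nonneg (sq_nonneg x) (sub_nonneg.2 hx)]
  calc normalTail x ≤ phi x * (2 / 3) := h1.trans (by have := phi_pos x; gcongr)
    _ = phiMax * (2 / 3) * Real.exp (-x ^ 2 / 2) := by rw [phi_eq]; ring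
    _ ≤ Real.exp (-(13 / 10)) * Real.exp (-x ^ 2 / 2) := by
        gcongr
        linarith [phiMax_lt, lt_exp_neg_thirteen_tenths]
    _ = _ := by
        rw [← Real.exp_add]
        ring_nf

lemma phi_mul_le_of_ge {x : ℝ} (hx : 3 / 2 ≤ x) :
    x * phi x * ((1 - centralMass x ^ 2) * artanhCentralMass x + centralMass x)
      ≤ centralMass x * ((1 - centralMass x ^ 2) * artanhCentralMass x) := by
  have hx0 : 0 < x := by linarith
  have hq := normalTail_pos x
  have hq' := normalTail_lt_half hx0
  have hlow := phi_mul_le_normalTail hx0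
  have hup := normalTail_le_phi_mul hx0
  have hlog := log_normalTail_le hx
  have hphi := phi_pos x
  have hlog' := Real.one_sub_inv_le_log_of_pos (by linarith : 0 < 1 - normalTail x)
  obtain ⟨w, hw⟩ : ∃ w, x ^ 2 = 9 / 4 + 2 * w := ⟨(x ^ 2 - 9 / 4) / 2, by ring⟩
  have hw0 : 0 ≤ w := by nlinarith
  have hs := mul_phi_bound hx hw
  rw [artanhCentralMass, centralMass]
  set q := normalTail x
  set s := x * phi x with hsdef
  have hs0 : 0 < s := by positivity
  have hsq : s ≤ q * (1 + x ^ 2) := by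
    rw [← mul_div_assoc, div_le_iff₀ (by positivity)] at hlow
    linarith
  have hqs : q ≤ 0.36 * s := by
    refine hup.trans ?_
    have : (x ^ 2 + 2) / (x ^ 3 + 3 * x) ≤ 0.36 * x := by
      rw [div_le_iff₀ (by positivity)]
      nlinarith [mul_nonneg hw0 hw0]
    calc _ ≤ phi x * (0.36 * x) := by gcongr
      _ = _ := by rw [hsdef]; ring
  have hs1 : s ≤ 0.195 := by
    have : s * (1 + w) ≤ s * (1 + w + w ^ 2 / 2) :=
      mul_le_mul_of_nonneg_left (le_add_of_nonneg_right (by positivity)) hs0.le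
    nlinarith
  have hmain := tail_poly_bound hw0 hq.le hqs hs
  rw [← hw] at hmain
  have hB : (1 - q) * (x ^ 2 + 2.6) - 2 * q
      ≤ (1 - q) * (2 * (Real.log (1 - q) - Real.log q)) := by
    have h1 : -q ≤ (1 - q) * Real.log (1 - q) := by
      calc -q = (1 - q) * (1 - (1 - q)⁻¹) := by
            have : 1 - q ≠ 0 := by linarith
            field_simp
            ring
        _ ≤ _ := by gcongr; linarith
    have h2 := mul_le_mul_of_nonneg_left hlog (by linarith : 0 ≤ 1 - q)
    linarith
  set B := (1 - q) * (2 * (Real.log (1 - q) - Real.log q)) with hBdef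
  have hE : (1 - (1 - 2 * q) ^ 2) * ((Real.log (1 - q) - Real.log q) / 2) = q * B := by
    rw [hBdef]
    ring
  rw [hE]
  have h1 : s * (1 - 2 * q) ≤ q * (1 + x ^ 2) * (1 - 2 * q) := by
    gcongr
    linarith
  have h2 := mul_le_mul_of_nonneg_left
    (hmain.trans (mul_le_mul_of_nonneg_right hB (by linarith : 0 ≤ 1 - 2 * q - s))) hq.le
  linarith

lemma phi_mul_le {x : ℝ} (hx : 0 < x) :
    x * phi x * ((1 - centralMass x ^ 2) * artanhCentralMass x + centralMass x)
      ≤ centralMass x * ((1 - centralMass x ^ 2) * artanhCentralMass x) :=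
  (le_total x (3 / 2)).elim (phi_mul_le_of_le hx) phi_mul_le_of_ge

lemma antitoneOn_centralMass_mul_artanh_div_sq :
    AntitoneOn (fun x => centralMass x * artanhCentralMass x / x ^ 2) (Set.Ioi 0) := by
  have hd : ∀ x : ℝ, 0 < x →
      HasDerivAt (fun x => centralMass x * artanhCentralMass x / x ^ 2) _ x := fun x hx =>
    ((hasDerivAt_centralMass x).mul (hasDerivAt_artanhCentralMass hx)).fun_div
      (hasDerivAt_pow 2 x) (by positivity)
  refine antitoneOn_of_deriv_nonpos (convex_Ioi 0)
    (fun x hx => (hd x hx).continuousAt.continuousWithinAt) ?_ ?_ <;> rw [interior_Ioi]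
  · exact fun x hx => (hd x hx).differentiableAt.differentiableWithinAt
  · intro x (hx : 0 < x)
    rw [(hd x hx).deriv]
    have hq := normalTail_pos x
    have hp : 0 < 1 - normalTail x := by linarith [normalTail_lt_half hx]
    have hkey := phi_mul_le hx
    refine div_nonpos_of_nonpos_of_nonneg ?_ (by positivity)
    have h4 : 1 - centralMass x ^ 2 = 4 * (normalTail x * (1 - normalTail x)) := by
      rw [centralMass]
      ring
    rw [h4] at hkey
    set m := normalTail x * (1 - normalTail x) with hm
    have hm0 : 0 < m := mul_pos hq hp
    have heq : (2 * phi x * artanhCentralMass x + centralMass x * (phi x / (2 * m))) * x ^ 2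
        - centralMass x * artanhCentralMass x * (2 * x)
        = x / (2 * m) * (x * phi x * (4 * m * artanhCentralMass x + centralMass x)
          - centralMass x * (4 * m * artanhCentralMass x)) := by
      field_simp
      ring
    norm_num at heq ⊢
    have := mul_nonpos_of_nonneg_of_nonpos (by positivity : 0 ≤ x / (2 * m))
      (sub_nonpos.2 hkey)
    linarith

theorem f_monotone :
    MonotoneOn
      (fun α : ℝ => ((1 - 2 * α) / 2 * Real.log ((1 - α) / α)) / (PhiInv α) ^ 2)
      (Set.Ioo 0 (1 / 2)) := by
  have heq : ∀ x, 0 < x → ((1 - 2 * normalTail x) / 2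
      * Real.log ((1 - normalTail x) / normalTail x)) / (PhiInv (normalTail x)) ^ 2
      = centralMass x * artanhCentralMass x / x ^ 2 := fun x hx => by
    have hq := normalTail_pos x
    have hq' := normalTail_lt_half hx
    have hinv : PhiInv (normalTail x) = -x := PhiInv_Phi (-x)
    rw [hinv, neg_sq, Real.log_div (by linarith) hq.ne', centralMass, artanhCentralMass]
    ring
  intro a ha b hb hab
  obtain ⟨x, hx, rfl⟩ := exists_normalTail_eq ha
  obtain ⟨y, hy, rfl⟩ := exists_normalTail_eq hb
  simp only [heq x hx, heq y hy]
  exact antitoneOn_centralMass_mul_artanh_div_sq hy hx (strictAnti_normalTail.le_iff_ge.1 hab)
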